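/- Assume (H2). There exists a constant C > 0, depending only on a₀ and C₀, such that for every τ ∈ (0,1) and every w ∈ C₀^∞(K; ℂ): (1 - τ²) q^{A⁰,0}_K(w) + (1 - τ⁻²) C ε₀⁴ b(x₀,e^{t₀})² ‖w‖²_{L²(K)} ≤ q̂^{Ã,0}_K(w) ≤ (1 + τ²) q^{A⁰,0}_K(w) + (1 + τ⁻²) C ε₀⁴ b(x₀,e^{t₀})² ‖w‖²_{L²(K)}. -/

import Mathlib

open MeasureTheory Real Filter

noncomputable section

/-- The upper half-plane ℍ as a subset of ℝ². -/
def UHP : Set (ℝ × ℝ) := {p : ℝ × ℝ | 0 < p.2}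

/-- The hyperbolic measure `dv = y⁻² dx dy` on ℍ. -/
def volH : Measure (ℝ × ℝ) :=
  (volume.restrict UHP).withDensity fun p => ENNReal.ofReal ((p.2 ^ 2)⁻¹)

/-- x-derivative of a complex function on ℝ². -/
def dX (f : ℝ × ℝ → ℂ) (p : ℝ × ℝ) : ℂ := fderiv ℝ f p (1, 0)

/-- y-derivative of a complex function on ℝ². -/
def dY (f : ℝ × ℝ → ℂ) (p : ℝ × ℝ) : ℂ := fderiv ℝ f p (0, 1)

/-- x-derivative of a real function on ℝ². -/
def dXr (f : ℝ × ℝ → ℝ) (p : ℝ × ℝ) : ℝ := fderiv ℝ f p (1, 0)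

/-- y-derivative of a real function on ℝ². -/
def dYr (f : ℝ × ℝ → ℝ) (p : ℝ × ℝ) : ℝ := fderiv ℝ f p (0, 1)

/-- The magnetic field `b̃ = y² (∂ₓA₂ - ∂_yA₁)`. -/
def fieldB (A₁ A₂ : ℝ × ℝ → ℝ) (p : ℝ × ℝ) : ℝ := p.2 ^ 2 * (dXr A₂ p - dYr A₁ p)

/-- The magnetic intensity `b = |b̃|`. -/
def intenB (A₁ A₂ : ℝ × ℝ → ℝ) (p : ℝ × ℝ) : ℝ := |fieldB A₁ A₂ p|

/-- Smooth compactly supported test functions with support inside a set `Ω`. -/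
def IsTestOn (Ω : Set (ℝ × ℝ)) (f : ℝ × ℝ → ℂ) : Prop :=
  ContDiff ℝ (⊤ : ℕ∞) f ∧ HasCompactSupport f ∧ tsupport f ⊆ Ω

/-- The quadratic form of the magnetic Laplacian on ℍ. -/
def qA (A₁ A₂ : ℝ × ℝ → ℝ) (f : ℝ × ℝ → ℂ) : ℝ :=
  ∫ p, p.2 ^ 2 * (‖-Complex.I * dX f p - (A₁ p : ℂ) * f p‖ ^ 2 +
    ‖-Complex.I * dY f p - (A₂ p : ℂ) * f p‖ ^ 2) ∂volH

/-- hyperbolic distance from `(x,y)` to `(0,1)`. -/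
def hDist (p : ℝ × ℝ) : ℝ :=
  2 * Real.arsinh (Real.sqrt (p.1 ^ 2 + (p.2 - 1) ^ 2) / (2 * Real.sqrt p.2))

/-- (H1) : the magnetic intensity tends to +∞ at infinity. -/
def H1 (A₁ A₂ : ℝ × ℝ → ℝ) : Prop :=
  ∀ M : ℝ, ∃ R : ℝ, ∀ p ∈ UHP, R ≤ hDist p → M ≤ intenB A₁ A₂ p

/-- (H2) : control of the derivative of the magnetic field. -/
def H2 (C₀ : ℝ) (A₁ A₂ : ℝ × ℝ → ℝ) : Prop :=
  ∀ p ∈ UHP, p.2 * Real.sqrt ((dXr (fieldB A₁ A₂) p) ^ 2 + (dYr (fieldB A₁ A₂) p) ^ 2)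
    ≤ C₀ * (intenB A₁ A₂ p + 1)

/-- Counting function of a quadratic form `q` with form domain `dom` and squared
norm `nsq`, via Glazman's lemma. -/
def NN (q : (ℝ × ℝ → ℂ) → ℝ) (dom : Set (ℝ × ℝ → ℂ)) (nsq : (ℝ × ℝ → ℂ) → ℝ)
    (lam : ℝ) : ℕ :=
  sSup {n : ℕ | ∃ V : Submodule ℂ (ℝ × ℝ → ℂ), (V : Set (ℝ × ℝ → ℂ)) ⊆ dom ∧
    Module.finrank ℂ V = n ∧ ∀ u ∈ V, u ≠ 0 → q u < lam * nsq u}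

/-- Heaviside function `[ρ]₊⁰`. -/
def heav (ρ : ℝ) : ℝ := if 0 < ρ then 1 else 0


/-- The rectangle `K = X₀ + K₀` with `K₀ = (-ε₀ a e^{t₀}/2, ε₀ a e^{t₀}/2) × (-ε₀/2, ε₀/2)`. -/
def Krect (x₀ t₀ a ε₀ : ℝ) : Set (ℝ × ℝ) :=
  Set.Ioo (x₀ - ε₀ * a * Real.exp t₀ / 2) (x₀ + ε₀ * a * Real.exp t₀ / 2) ×ˢ
    Set.Ioo (t₀ - ε₀ / 2) (t₀ + ε₀ / 2)

/-- `Ã₁(x,t) = -∫_{e^{t₀}}^{e^t} b̃(x,s) s⁻² ds`. -/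
def Atil (A₁ A₂ : ℝ × ℝ → ℝ) (t₀ : ℝ) (p : ℝ × ℝ) : ℝ :=
  -∫ s in Real.exp t₀..Real.exp p.2, fieldB A₁ A₂ (p.1, s) / s ^ 2

/-- `A₁⁰(x,t) = -(t - t₀) e^{-t₀} b̃₀`. -/
def Azero (t₀ b₀ : ℝ) (p : ℝ × ℝ) : ℝ := -(p.2 - t₀) * Real.exp (-t₀) * b₀

/-- The Dirichlet form `q̂^Ã_K`. -/
def qhatK (A₁ A₂ : ℝ × ℝ → ℝ) (x₀ t₀ a ε₀ : ℝ) (w : ℝ × ℝ → ℂ) : ℝ :=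
  ∫ p in Krect x₀ t₀ a ε₀,
    (Real.exp (2 * p.2) * ‖-Complex.I * dX w p - (Atil A₁ A₂ t₀ p : ℂ) * w p‖ ^ 2
      + ‖dY w p‖ ^ 2 + (1/4) * ‖w p‖ ^ 2)

/-- The Dirichlet form `q̂^{Ã,0}_K` (with frozen factor `e^{2t₀}`). -/
def qhatK0 (A₁ A₂ : ℝ × ℝ → ℝ) (x₀ t₀ a ε₀ : ℝ) (w : ℝ × ℝ → ℂ) : ℝ :=
  ∫ p in Krect x₀ t₀ a ε₀,
    (Real.exp (2 * t₀) * ‖-Complex.I * dX w p - (Atil A₁ A₂ t₀ p : ℂ) * w p‖ ^ 2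
      + ‖dY w p‖ ^ 2 + (1/4) * ‖w p‖ ^ 2)

/-- The Dirichlet form `q^{A⁰,0}_K` of the frozen constant magnetic field `b̃₀`. -/
def qK0 (x₀ t₀ a ε₀ b₀ : ℝ) (w : ℝ × ℝ → ℂ) : ℝ :=
  ∫ p in Krect x₀ t₀ a ε₀,
    (Real.exp (2 * t₀) * ‖-Complex.I * dX w p - (Azero t₀ b₀ p : ℂ) * w p‖ ^ 2
      + ‖dY w p‖ ^ 2 + (1/4) * ‖w p‖ ^ 2)


/-!
Both forms differ only through their magnetic potentials. In the coordinates `(x, t)` with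
`y = e^t`, (H2) is a differential inequality `|∂B| ≤ C (|B| + 1)` along segments, so Grönwall's
inequality shows that `b̃` varies by `O(ε₀ b)` on a rectangle of size `ε₀`. Integrating once more in
`t` gives `e^{t₀} |Ã₁ - A₁⁰| = O(ε₀² b)`, and expanding the square of the perturbed covariant
derivative with a weighted Young inequality gives the upper bound. The lower bound is the upper
bound with the two potentials exchanged.
-/

theorem norm_sub_le_of_norm_deriv_right_le_mul_norm_add_one {E : Type*} [NormedAddCommGroup E]
    [NormedSpace ℝ E] {f f' : ℝ → E} {K a b : ℝ} (hK : 0 ≤ K) (hf : ContinuousOn f (Set.Icc a b))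
    (hf' : ∀ x ∈ Set.Ico a b, HasDerivWithinAt f (f' x) (Set.Ici x) x)
    (bound : ∀ x ∈ Set.Ico a b, ‖f' x‖ ≤ K * (‖f x‖ + 1)) :
    ∀ x ∈ Set.Icc a b, ‖f x - f a‖ ≤ (‖f a‖ + 1) * (exp (K * (x - a)) - 1) := by
  have bound_sub : ∀ x ∈ Set.Ico a b, ‖f' x‖ ≤ K * ‖f x - f a‖ + K * (‖f a‖ + 1) := fun x hx =>
    calc ‖f' x‖ ≤ K * (‖f x‖ + 1) := bound x hx
      _ ≤ K * (‖f x - f a‖ + ‖f a‖ + 1) := by gcongr; exact norm_le_norm_sub_add _ _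
      _ = K * ‖f x - f a‖ + K * (‖f a‖ + 1) := by ring
  intro x hx
  have gronwall := norm_le_gronwallBound_of_norm_deriv_right_le (δ := 0)
    (hf.sub continuousOn_const) (fun x hx => (hf' x hx).sub_const (f a)) (by simp) bound_sub x hx
  rcases hK.eq_or_lt with rfl | hK
  · simpa [gronwallBound_K0] using gronwall
  · simpa [gronwallBound_of_K_ne_0 hK.ne', mul_div_cancel_left₀ _ hK.ne'] using gronwall

theorem exp_mul_sub_one_le {s : ℝ} (hs₀ : 0 ≤ s) (hs₁ : s ≤ 1) (m : ℝ) :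
    exp (s * m) - 1 ≤ s * (exp m - 1) := by
  have chord := convexOn_exp.2 (Set.mem_univ m) (Set.mem_univ 0) hs₀ (sub_nonneg.2 hs₁) (by ring)
  simp only [smul_eq_mul, mul_zero, add_zero, exp_zero, mul_one] at chord
  linarith

theorem exp_le_two_of_abs_le_half {x : ℝ} (hx : |x| ≤ 1 / 2) : exp x ≤ 2 := by
  linarith [(abs_le.1 (abs_exp_sub_one_le (x := x) (by linarith))).2]

theorem abs_mul_exp_neg_sub_le (b b₀ t₀ u : ℝ) :
    |b * exp (-u) - b₀ * exp (-t₀)| ≤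
      exp (-t₀) * (|b - b₀| * exp (t₀ - u) + |b₀| * |exp (t₀ - u) - 1|) := by
  have hsplit : b * exp (-u) - b₀ * exp (-t₀) =
      exp (-t₀) * ((b - b₀) * exp (t₀ - u) + b₀ * (exp (t₀ - u) - 1)) := by
    have hu : exp (-u) = exp (-t₀) * exp (t₀ - u) := by rw [← exp_add]; ring_nf
    rw [hu]; ring
  rw [hsplit, abs_mul, abs_exp]
  gcongr
  refine (abs_add_le _ _).trans_eq ?_
  rw [abs_mul, abs_mul, abs_exp]

theorem norm_add_sq_le_weighted {E : Type*} [SeminormedAddCommGroup E] {η : ℝ} (hη : 0 < η)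
    (u v : E) : ‖u + v‖ ^ 2 ≤ (1 + η) * ‖u‖ ^ 2 + (1 + η⁻¹) * ‖v‖ ^ 2 :=
  calc ‖u + v‖ ^ 2 ≤ (‖u‖ + ‖v‖) ^ 2 := by gcongr; exact norm_add_le u v
    _ ≤ (1 + η) * ‖u‖ ^ 2 + (1 + η⁻¹) * ‖v‖ ^ 2 := by
      linarith [two_mul_le_add_mul_sq (a := ‖u‖) (b := ‖v‖) hη]

theorem fderiv_apply_eq_dXr_add_dYr (f : ℝ × ℝ → ℝ) (p v : ℝ × ℝ) :
    fderiv ℝ f p v = v.1 * dXr f p + v.2 * dYr f p := by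
  have hv : v = v.1 • ((1, 0) : ℝ × ℝ) + v.2 • ((0, 1) : ℝ × ℝ) := by simp
  conv_lhs => rw [hv, map_add, map_smul, map_smul]
  rfl

theorem abs_fderiv_apply_le (f : ℝ × ℝ → ℝ) (p v : ℝ × ℝ) :
    |fderiv ℝ f p v| ≤ (|v.1| + |v.2|) * √(dXr f p ^ 2 + dYr f p ^ 2) := by
  have hX : |dXr f p| ≤ √(dXr f p ^ 2 + dYr f p ^ 2) :=
    abs_le_sqrt (le_add_of_nonneg_right (sq_nonneg _))
  have hY : |dYr f p| ≤ √(dXr f p ^ 2 + dYr f p ^ 2) :=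
    abs_le_sqrt (le_add_of_nonneg_left (sq_nonneg _))
  calc |fderiv ℝ f p v| ≤ |v.1| * |dXr f p| + |v.2| * |dYr f p| := by
        rw [fderiv_apply_eq_dXr_add_dYr, ← abs_mul, ← abs_mul]
        exact abs_add_le _ _
    _ ≤ (|v.1| + |v.2|) * √(dXr f p ^ 2 + dYr f p ^ 2) := by rw [add_mul]; gcongr

theorem isOpen_UHP : IsOpen UHP := isOpen_lt continuous_const continuous_snd

theorem continuous_comp_fst_exp_snd {B : ℝ × ℝ → ℝ} (hB : ContinuousOn B UHP) :
    Continuous fun q : ℝ × ℝ => B (q.1, exp q.2) :=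
  hB.comp_continuous (by fun_prop) fun _ => exp_pos _

/-- Hypothesis (H2) for an arbitrary function `B` on the half-plane: its hyperbolic gradient grows
at most linearly in `|B|`. By definition, `H2 C₀ A₁ A₂` is `HypGradientBound C₀ (fieldB A₁ A₂)`. -/
def HypGradientBound (C₀ : ℝ) (B : ℝ × ℝ → ℝ) : Prop :=
  ∀ p ∈ UHP, p.2 * √(dXr B p ^ 2 + dYr B p ^ 2) ≤ C₀ * (|B p| + 1)

namespace HypGradientBound

variable {C₀ : ℝ} {B : ℝ × ℝ → ℝ}

theorem abs_sub_le_of_curve (hC₀ : 0 ≤ C₀) (hB : DifferentiableOn ℝ B UHP)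
    (hgrad : HypGradientBound C₀ B) {γ γ' : ℝ → ℝ × ℝ} {L : ℝ} (hL : 0 ≤ L)
    (hγ : ∀ θ ∈ Set.Icc (0 : ℝ) 1, HasDerivAt γ (γ' θ) θ)
    (hγU : ∀ θ ∈ Set.Icc (0 : ℝ) 1, γ θ ∈ UHP)
    (hspeed : ∀ θ ∈ Set.Icc (0 : ℝ) 1, |(γ' θ).1| + |(γ' θ).2| ≤ L * (γ θ).2) :
    |B (γ 1) - B (γ 0)| ≤ (|B (γ 0)| + 1) * (exp (C₀ * L) - 1) := by
  have hderiv : ∀ θ ∈ Set.Icc (0 : ℝ) 1,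
      HasDerivAt (fun θ => B (γ θ)) (fderiv ℝ B (γ θ) (γ' θ)) θ := fun θ hθ =>
    (hB.differentiableAt (isOpen_UHP.mem_nhds (hγU θ hθ))).hasFDerivAt.comp_hasDerivAt θ (hγ θ hθ)
  have hbound : ∀ θ ∈ Set.Ico (0 : ℝ) 1,
      ‖fderiv ℝ B (γ θ) (γ' θ)‖ ≤ C₀ * L * (‖B (γ θ)‖ + 1) := by
    intro θ hθ
    have hθ' := Set.Ico_subset_Icc_self hθ
    set G := √(dXr B (γ θ) ^ 2 + dYr B (γ θ) ^ 2)
    calc ‖fderiv ℝ B (γ θ) (γ' θ)‖ ≤ (|(γ' θ).1| + |(γ' θ).2|) * G := abs_fderiv_apply_le _ _ _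
      _ ≤ L * (γ θ).2 * G := by gcongr; exact hspeed θ hθ'
      _ = L * ((γ θ).2 * G) := by ring
      _ ≤ L * (C₀ * (|B (γ θ)| + 1)) := mul_le_mul_of_nonneg_left (hgrad _ (hγU θ hθ')) hL
      _ = C₀ * L * (‖B (γ θ)‖ + 1) := by rw [norm_eq_abs]; ring
  simpa using norm_sub_le_of_norm_deriv_right_le_mul_norm_add_one (mul_nonneg hC₀ hL)
    (fun θ hθ => (hderiv θ hθ).continuousAt.continuousWithinAt)
    (fun θ hθ => (hderiv θ (Set.Ico_subset_Icc_self hθ)).hasDerivWithinAt) hbound 1 (by simp)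

theorem abs_sub_le (hC₀ : 0 ≤ C₀) (hB : DifferentiableOn ℝ B UHP) (hgrad : HypGradientBound C₀ B)
    (x₀ t₀ x t : ℝ) :
    |B (x, exp t) - B (x₀, exp t₀)| ≤ (|B (x₀, exp t₀)| + 1) *
      (exp (C₀ * (|x - x₀| * exp (|t - t₀| - t₀) + |t - t₀|)) - 1) := by
  let γ : ℝ → ℝ × ℝ := fun θ => (x₀ + θ * (x - x₀), exp (t₀ + θ * (t - t₀)))
  have hγ : ∀ θ, HasDerivAt γ (x - x₀, exp (t₀ + θ * (t - t₀)) * (t - t₀)) θ := fun θ => by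
    refine HasDerivAt.prodMk ?_ (HasDerivAt.exp ?_)
    · simpa using ((hasDerivAt_id θ).mul_const (x - x₀)).const_add x₀
    · simpa using ((hasDerivAt_id θ).mul_const (t - t₀)).const_add t₀
  have hspeed : ∀ θ ∈ Set.Icc (0 : ℝ) 1,
      |x - x₀| + |exp (t₀ + θ * (t - t₀)) * (t - t₀)| ≤
        (|x - x₀| * exp (|t - t₀| - t₀) + |t - t₀|) * exp (t₀ + θ * (t - t₀)) := by
    intro θ hθ
    have hθt : -|t - t₀| ≤ θ * (t - t₀) := by
      refine neg_le_of_abs_le ?_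
      rw [abs_mul, abs_of_nonneg hθ.1]
      exact mul_le_of_le_one_left (abs_nonneg _) hθ.2
    have hone : 1 ≤ exp (|t - t₀| - t₀) * exp (t₀ + θ * (t - t₀)) := by
      rw [← exp_add]
      exact one_le_exp (by linarith)
    rw [abs_mul, abs_exp, add_mul, mul_comm (exp _) |t - t₀|, mul_assoc |x - x₀|]
    gcongr
    exact le_mul_of_one_le_right (abs_nonneg _) hone
  simpa [γ] using hgrad.abs_sub_le_of_curve hC₀ hB (by positivity) (fun θ _ => hγ θ)
    (fun θ _ => exp_pos _) hspeed

theorem abs_sub_le_on_small_rectangle (hC₀ : 0 ≤ C₀) (hB : DifferentiableOn ℝ B UHP)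
    (hgrad : HypGradientBound C₀ B) {a₀ ε : ℝ} (hε₀ : 0 ≤ ε) (hε₁ : ε ≤ 1) {x₀ t₀ x t : ℝ}
    (hx : |x - x₀| ≤ ε * a₀ * exp t₀ / 2) (ht : |t - t₀| ≤ ε / 2) :
    |B (x, exp t) - B (x₀, exp t₀)| ≤
      ε * (exp (C₀ * (1 + a₀)) - 1) * (|B (x₀, exp t₀)| + 1) := by
  have hexp : exp |t - t₀| ≤ 2 := exp_le_two_of_abs_le_half (by rw [abs_abs]; linarith)
  have hlength : |x - x₀| * exp (|t - t₀| - t₀) + |t - t₀| ≤ ε * (1 + a₀) :=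
    calc |x - x₀| * exp (|t - t₀| - t₀) + |t - t₀|
        ≤ |x - x₀| * (2 * exp (-t₀)) + ε := by
          rw [sub_eq_add_neg |t - t₀|, exp_add]; gcongr; linarith
      _ ≤ ε * a₀ * exp t₀ / 2 * (2 * exp (-t₀)) + ε := by gcongr
      _ = ε * (1 + a₀) := by rw [exp_neg]; field_simp; ring
  calc |B (x, exp t) - B (x₀, exp t₀)|
      ≤ (|B (x₀, exp t₀)| + 1) * (exp (C₀ * (ε * (1 + a₀))) - 1) :=
        (hgrad.abs_sub_le hC₀ hB x₀ t₀ x t).trans (by gcongr)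
    _ ≤ (|B (x₀, exp t₀)| + 1) * (ε * (exp (C₀ * (1 + a₀)) - 1)) := by
        rw [mul_left_comm C₀]
        gcongr
        exact exp_mul_sub_one_le hε₀ hε₁ _
    _ = ε * (exp (C₀ * (1 + a₀)) - 1) * (|B (x₀, exp t₀)| + 1) := by ring

theorem abs_mul_exp_neg_sub_le_on_small_rectangle (hC₀ : 0 ≤ C₀) (hB : DifferentiableOn ℝ B UHP)
    (hgrad : HypGradientBound C₀ B) {a₀ ε : ℝ} (ha₀ : 0 ≤ a₀) (hε₀ : 0 ≤ ε) (hε₁ : ε ≤ 1)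
    {x₀ t₀ x t : ℝ} (hb : 1 ≤ |B (x₀, exp t₀)|)
    (hx : |x - x₀| ≤ ε * a₀ * exp t₀ / 2) (ht : |t - t₀| ≤ ε / 2) :
    |B (x, exp t) * exp (-t) - B (x₀, exp t₀) * exp (-t₀)| ≤
      exp (-t₀) * (4 * exp (C₀ * (1 + a₀)) * ε * |B (x₀, exp t₀)|) := by
  have hvar := hgrad.abs_sub_le_on_small_rectangle hC₀ hB hε₀ hε₁ hx ht
  set b₀ := B (x₀, exp t₀)
  set M := exp (C₀ * (1 + a₀))
  have : 0 ≤ M - 1 := sub_nonneg.2 (one_le_exp (by positivity))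
  rw [abs_sub_comm] at ht
  have hexp : exp (t₀ - t) ≤ 2 := exp_le_two_of_abs_le_half (by linarith)
  have hexp_sub : |exp (t₀ - t) - 1| ≤ ε := (abs_exp_sub_one_le (by linarith)).trans (by linarith)
  refine (abs_mul_exp_neg_sub_le _ _ _ _).trans ?_
  gcongr
  calc |B (x, exp t) - b₀| * exp (t₀ - t) + |b₀| * |exp (t₀ - t) - 1|
      ≤ ε * (M - 1) * (|b₀| + |b₀|) * 2 + |b₀| * ε := by
        gcongr
        exact hvar.trans (by gcongr)
    _ = 4 * M * ε * |b₀| - 3 * (|b₀| * ε) := by ring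
    _ ≤ 4 * M * ε * |b₀| := sub_le_self _ (by positivity)

end HypGradientBound

theorem differentiableOn_fieldB {A₁ A₂ : ℝ × ℝ → ℝ} (hA₁ : ContDiffOn ℝ 2 A₁ UHP)
    (hA₂ : ContDiffOn ℝ 2 A₂ UHP) : DifferentiableOn ℝ (fieldB A₁ A₂) UHP := by
  have hfderiv : ∀ {A : ℝ × ℝ → ℝ}, ContDiffOn ℝ 2 A UHP →
      DifferentiableOn ℝ (fderiv ℝ A) UHP := fun hA =>
    (hA.fderiv_of_isOpen (m := 1) isOpen_UHP one_add_one_eq_two.le).differentiableOn one_ne_zero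
  exact (differentiableOn_snd.pow 2).mul (((hfderiv hA₂).clm_apply (differentiableOn_const _)).sub
    ((hfderiv hA₁).clm_apply (differentiableOn_const _)))

theorem integral_exp_exp_div_sq {f : ℝ → ℝ} (hf : ContinuousOn f (Set.Ioi 0)) (a b : ℝ) :
    ∫ s in exp a..exp b, f s / s ^ 2 = ∫ u in a..b, f (exp u) * exp (-u) := by
  have hcont : ContinuousOn (fun s => f s / s ^ 2) (exp '' Set.uIcc a b) := by
    rintro _ ⟨u, -, rfl⟩
    exact ((hf.continuousAt (Ioi_mem_nhds (exp_pos u))).div (by fun_prop)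
      (by positivity)).continuousWithinAt
  rw [← intervalIntegral.integral_comp_mul_deriv' (fun u _ => hasDerivAt_exp u)
    continuous_exp.continuousOn hcont]
  refine intervalIntegral.integral_congr fun u _ => ?_
  simp only [Function.comp, exp_neg]
  field_simp

section Potentials

variable {A₁ A₂ : ℝ × ℝ → ℝ}

theorem Atil_eq_integral_exp (hB : ContinuousOn (fieldB A₁ A₂) UHP) (t₀ : ℝ) (p : ℝ × ℝ) :
    Atil A₁ A₂ t₀ p = -∫ u in t₀..p.2, fieldB A₁ A₂ (p.1, exp u) * exp (-u) := by
  have hslice : ContinuousOn (fun s => fieldB A₁ A₂ (p.1, s)) (Set.Ioi 0) :=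
    hB.comp (by fun_prop) fun _ hs => hs
  rw [Atil, integral_exp_exp_div_sq hslice]

theorem continuous_Atil (hB : ContinuousOn (fieldB A₁ A₂) UHP) (t₀ : ℝ) :
    Continuous (Atil A₁ A₂ t₀) := by
  rw [funext (Atil_eq_integral_exp hB t₀)]
  have hfield := continuous_comp_fst_exp_snd hB
  exact (intervalIntegral.continuous_parametric_primitive_of_continuous (μ := volume)
    (f := fun x u => fieldB A₁ A₂ (x, exp u) * exp (-u)) (by fun_prop)).neg

theorem continuous_Azero (t₀ b₀ : ℝ) : Continuous (Azero t₀ b₀) := by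
  unfold Azero
  fun_prop

theorem Atil_sub_Azero_eq_integral (hB : ContinuousOn (fieldB A₁ A₂) UHP) (t₀ b₀ x t : ℝ) :
    Atil A₁ A₂ t₀ (x, t) - Azero t₀ b₀ (x, t) =
      -∫ u in t₀..t, (fieldB A₁ A₂ (x, exp u) * exp (-u) - b₀ * exp (-t₀)) := by
  have hcont : Continuous fun u => fieldB A₁ A₂ (x, exp u) * exp (-u) :=
    ((continuous_comp_fst_exp_snd hB).comp (Continuous.prodMk_right x)).mul (by fun_prop)
  rw [intervalIntegral.integral_sub (hcont.intervalIntegrable _ _) (by simp),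
    Atil_eq_integral_exp hB, intervalIntegral.integral_const, smul_eq_mul, Azero]
  ring

theorem abs_Atil_sub_Azero_le {C₀ : ℝ} (hC₀ : 0 ≤ C₀) (hB : DifferentiableOn ℝ (fieldB A₁ A₂) UHP)
    (hgrad : H2 C₀ A₁ A₂) {a₀ ε : ℝ} (ha₀ : 0 ≤ a₀) (hε₀ : 0 ≤ ε) (hε₁ : ε ≤ 1) {x₀ t₀ x t : ℝ}
    (hb : 1 ≤ intenB A₁ A₂ (x₀, exp t₀))
    (hx : |x - x₀| ≤ ε * a₀ * exp t₀ / 2) (ht : |t - t₀| ≤ ε / 2) :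
    |Atil A₁ A₂ t₀ (x, t) - Azero t₀ (fieldB A₁ A₂ (x₀, exp t₀)) (x, t)| ≤
      exp (-t₀) * (2 * exp (C₀ * (1 + a₀)) * ε ^ 2 * intenB A₁ A₂ (x₀, exp t₀)) := by
  unfold intenB at *
  set b₀ := fieldB A₁ A₂ (x₀, exp t₀)
  set M := exp (C₀ * (1 + a₀))
  have hintegrand : ∀ u ∈ Set.uIoc t₀ t,
      ‖fieldB A₁ A₂ (x, exp u) * exp (-u) - b₀ * exp (-t₀)‖ ≤
        exp (-t₀) * (4 * M * ε * |b₀|) := fun u hu =>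
    HypGradientBound.abs_mul_exp_neg_sub_le_on_small_rectangle hC₀ hB hgrad ha₀ hε₀ hε₁ hb hx
      ((Set.abs_sub_left_of_mem_uIcc (Set.uIoc_subset_uIcc hu)).trans ht)
  rw [Atil_sub_Azero_eq_integral hB.continuousOn, abs_neg]
  calc |∫ u in t₀..t, (fieldB A₁ A₂ (x, exp u) * exp (-u) - b₀ * exp (-t₀))|
      ≤ exp (-t₀) * (4 * M * ε * |b₀|) * |t - t₀| :=
        intervalIntegral.norm_integral_le_of_norm_le_const hintegrand
    _ ≤ exp (-t₀) * (4 * M * ε * |b₀|) * (ε / 2) := by gcongr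
    _ = exp (-t₀) * (2 * M * ε ^ 2 * |b₀|) := by ring

end Potentials

section Rectangle

variable {x₀ t₀ a ε : ℝ}

theorem measurableSet_Krect : MeasurableSet (Krect x₀ t₀ a ε) :=
  measurableSet_Ioo.prod measurableSet_Ioo

theorem integrableOn_Krect_of_continuous {f : ℝ × ℝ → ℝ} (hf : Continuous f) :
    IntegrableOn f (Krect x₀ t₀ a ε) :=
  (hf.continuousOn.integrableOn_compact (isCompact_Icc.prod isCompact_Icc)).mono_set
    (Set.prod_mono Set.Ioo_subset_Icc_self Set.Ioo_subset_Icc_self)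

theorem abs_fst_sub_le_of_mem_Krect {p : ℝ × ℝ} (hp : p ∈ Krect x₀ t₀ a ε) :
    |p.1 - x₀| ≤ ε * a * exp t₀ / 2 :=
  abs_sub_le_iff.2 ⟨by linarith [hp.1.2], by linarith [hp.1.1]⟩

theorem abs_snd_sub_le_of_mem_Krect {p : ℝ × ℝ} (hp : p ∈ Krect x₀ t₀ a ε) :
    |p.2 - t₀| ≤ ε / 2 :=
  abs_sub_le_iff.2 ⟨by linarith [hp.2.2], by linarith [hp.2.1]⟩

end Rectangle

theorem exp_two_mul_Atil_sub_Azero_sq_le {A₁ A₂ : ℝ × ℝ → ℝ} {C₀ : ℝ} (hC₀ : 0 ≤ C₀)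
    (hB : DifferentiableOn ℝ (fieldB A₁ A₂) UHP) (hgrad : H2 C₀ A₁ A₂) {a₀ a ε : ℝ} (ha₀ : 0 ≤ a₀)
    (ha : a ≤ a₀) (hε₀ : 0 ≤ ε) (hε₁ : ε ≤ 1) {x₀ t₀ : ℝ}
    (hb : 1 ≤ intenB A₁ A₂ (x₀, exp t₀)) {p : ℝ × ℝ} (hp : p ∈ Krect x₀ t₀ a ε) :
    exp (2 * t₀) * (Atil A₁ A₂ t₀ p - Azero t₀ (fieldB A₁ A₂ (x₀, exp t₀)) p) ^ 2 ≤
      (2 * exp (C₀ * (1 + a₀))) ^ 2 * ε ^ 4 * intenB A₁ A₂ (x₀, exp t₀) ^ 2 := by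
  have hx : |p.1 - x₀| ≤ ε * a₀ * exp t₀ / 2 :=
    (abs_fst_sub_le_of_mem_Krect hp).trans (by gcongr)
  set R := 2 * exp (C₀ * (1 + a₀)) * ε ^ 2 * intenB A₁ A₂ (x₀, exp t₀)
  have hdiff : |Atil A₁ A₂ t₀ p - Azero t₀ (fieldB A₁ A₂ (x₀, exp t₀)) p| ≤ exp (-t₀) * R :=
    abs_Atil_sub_Azero_le hC₀ hB hgrad ha₀ hε₀ hε₁ hb hx (abs_snd_sub_le_of_mem_Krect hp)
  calc exp (2 * t₀) * (Atil A₁ A₂ t₀ p - Azero t₀ (fieldB A₁ A₂ (x₀, exp t₀)) p) ^ 2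
      ≤ exp (2 * t₀) * (exp (-t₀) * R) ^ 2 := by
        rw [← sq_abs (Atil A₁ A₂ t₀ p - _)]; gcongr
    _ = R ^ 2 := by rw [two_mul, exp_add, exp_neg]; field_simp
    _ = (2 * exp (C₀ * (1 + a₀))) ^ 2 * ε ^ 4 * intenB A₁ A₂ (x₀, exp t₀) ^ 2 := by ring

/-- The integrand of the magnetic Dirichlet form with constant weight `c` on the `x`-derivative and
magnetic potential `(A, 0)`. Both `qhatK0` and `qK0` integrate it over `Krect` with
`c = exp (2 * t₀)`, for `A = Atil A₁ A₂ t₀` and `A = Azero t₀ b₀` respectively. -/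
def magneticDensity (c : ℝ) (A : ℝ × ℝ → ℝ) (w : ℝ × ℝ → ℂ) (p : ℝ × ℝ) : ℝ :=
  c * ‖-Complex.I * dX w p - (A p : ℂ) * w p‖ ^ 2 + ‖dY w p‖ ^ 2 + (1 / 4) * ‖w p‖ ^ 2

section MagneticDensity

variable {c : ℝ} {A A' : ℝ × ℝ → ℝ} {w : ℝ × ℝ → ℂ}

theorem continuous_magneticDensity (c : ℝ) (hA : Continuous A) (hw : ContDiff ℝ 1 w) :
    Continuous (magneticDensity c A w) := by
  have hw₀ : Continuous w := hw.continuous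
  have hfderiv : Continuous (fderiv ℝ w) := hw.continuous_fderiv one_ne_zero
  have hX : Continuous (dX w) := hfderiv.clm_apply continuous_const
  have hY : Continuous (dY w) := hfderiv.clm_apply continuous_const
  unfold magneticDensity
  fun_prop

theorem magneticDensity_le {η D : ℝ} (hc : 0 ≤ c) (hη : 0 < η) {p : ℝ × ℝ}
    (hD : c * (A' p - A p) ^ 2 ≤ D) :
    magneticDensity c A' w p ≤
      (1 + η) * magneticDensity c A w p + (1 + η⁻¹) * D * ‖w p‖ ^ 2 := by
  set u := -Complex.I * dX w p - (A p : ℂ) * w p with hu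
  set δ := ((A p - A' p : ℝ) : ℂ) * w p with hδ
  have hshift : -Complex.I * dX w p - (A' p : ℂ) * w p = u + δ := by
    rw [hu, hδ]; push_cast; ring
  have hδ_norm : ‖δ‖ ^ 2 = (A' p - A p) ^ 2 * ‖w p‖ ^ 2 := by
    rw [hδ, norm_mul, mul_pow, Complex.norm_real, norm_eq_abs, sq_abs, sub_sq_comm]
  have hcovariant : c * ‖u + δ‖ ^ 2 ≤
      (1 + η) * (c * ‖u‖ ^ 2) + (1 + η⁻¹) * D * ‖w p‖ ^ 2 :=
    calc c * ‖u + δ‖ ^ 2 ≤ c * ((1 + η) * ‖u‖ ^ 2 + (1 + η⁻¹) * ‖δ‖ ^ 2) := by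
          gcongr; exact norm_add_sq_le_weighted hη u δ
      _ = (1 + η) * (c * ‖u‖ ^ 2) + (1 + η⁻¹) * (c * (A' p - A p) ^ 2) * ‖w p‖ ^ 2 := by
          rw [hδ_norm]; ring
      _ ≤ (1 + η) * (c * ‖u‖ ^ 2) + (1 + η⁻¹) * D * ‖w p‖ ^ 2 := by gcongr
  have hrest : 0 ≤ η * (‖dY w p‖ ^ 2 + (1 / 4) * ‖w p‖ ^ 2) := by positivity
  rw [magneticDensity, magneticDensity, hshift, ← hu]
  linarith

variable {μ : Measure (ℝ × ℝ)} {D η : ℝ}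

theorem integral_magneticDensity_le (hc : 0 ≤ c) (hη : 0 < η)
    (hA : Integrable (magneticDensity c A w) μ) (hA' : Integrable (magneticDensity c A' w) μ)
    (hw : Integrable (fun p => ‖w p‖ ^ 2) μ) (hD : ∀ᵐ p ∂μ, c * (A' p - A p) ^ 2 ≤ D) :
    ∫ p, magneticDensity c A' w p ∂μ ≤
      (1 + η) * (∫ p, magneticDensity c A w p ∂μ) + (1 + η⁻¹) * D * ∫ p, ‖w p‖ ^ 2 ∂μ := by
  rw [← integral_const_mul, ← integral_const_mul,
    ← integral_add (hA.const_mul _) (hw.const_mul _)]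
  exact integral_mono_ae hA' ((hA.const_mul _).add (hw.const_mul _))
    (hD.mono fun p hp => magneticDensity_le hc hη hp)

theorem le_integral_magneticDensity (hc : 0 ≤ c) (hη₀ : 0 < η) (hη₁ : η < 1)
    (hA : Integrable (magneticDensity c A w) μ) (hA' : Integrable (magneticDensity c A' w) μ)
    (hw : Integrable (fun p => ‖w p‖ ^ 2) μ) (hD : ∀ᵐ p ∂μ, c * (A' p - A p) ^ 2 ≤ D) :
    (1 - η) * (∫ p, magneticDensity c A w p ∂μ) + (1 - η⁻¹) * D * ∫ p, ‖w p‖ ^ 2 ∂μ ≤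
      ∫ p, magneticDensity c A' w p ∂μ := by
  have hη : 0 < 1 - η := sub_pos.2 hη₁
  -- The weight `σ = η / (1 - η)` solves `(1 - η) (1 + σ) = 1` and `(1 - η) (1 + σ⁻¹) = η⁻¹ - 1`.
  have hswap := integral_magneticDensity_le hc (div_pos hη₀ hη) hA' hA hw
    (hD.mono fun p hp => by rwa [sub_sq_comm])
  have hscaled := mul_le_mul_of_nonneg_left hswap hη.le
  have hfactor : (1 - η) * (1 + η / (1 - η)) = 1 := by field_simp; ring
  have hfactor_inv : (1 - η) * (1 + (η / (1 - η))⁻¹) = η⁻¹ - 1 := by field_simp; ring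
  rw [mul_add, ← mul_assoc, hfactor, ← mul_assoc, ← mul_assoc, hfactor_inv] at hscaled
  linarith

end MagneticDensity

theorem form_comparison_constant_field_general
    (C₀ : ℝ) (hC₀ : 0 ≤ C₀) (a₀ : ℝ) (ha₀ : 0 ≤ a₀) :
    ∃ C > 0, ∀ A₁ A₂ : ℝ × ℝ → ℝ, DifferentiableOn ℝ (fieldB A₁ A₂) UHP → H2 C₀ A₁ A₂ →
      ∀ a : ℝ, a ≤ a₀ → ∀ ε₀ : ℝ, 0 < ε₀ → ε₀ ≤ 1 →
      ∀ x₀ t₀ : ℝ, 1 ≤ intenB A₁ A₂ (x₀, exp t₀) →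
      ∀ τ : ℝ, 0 < τ → τ < 1 →
      ∀ w : ℝ × ℝ → ℂ, ContDiff ℝ 1 w →
        (1 - τ ^ 2) * qK0 x₀ t₀ a ε₀ (fieldB A₁ A₂ (x₀, exp t₀)) w
            + (1 - (τ ^ 2)⁻¹) * C * ε₀ ^ 4 * intenB A₁ A₂ (x₀, exp t₀) ^ 2 *
              (∫ p in Krect x₀ t₀ a ε₀, ‖w p‖ ^ 2)
          ≤ qhatK0 A₁ A₂ x₀ t₀ a ε₀ w ∧
        qhatK0 A₁ A₂ x₀ t₀ a ε₀ w ≤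
          (1 + τ ^ 2) * qK0 x₀ t₀ a ε₀ (fieldB A₁ A₂ (x₀, exp t₀)) w
            + (1 + (τ ^ 2)⁻¹) * C * ε₀ ^ 4 * intenB A₁ A₂ (x₀, exp t₀) ^ 2 *
              (∫ p in Krect x₀ t₀ a ε₀, ‖w p‖ ^ 2) := by
  refine ⟨(2 * exp (C₀ * (1 + a₀))) ^ 2, by positivity, ?_⟩
  intro A₁ A₂ hB hgrad a ha ε hε₀ hε₁ x₀ t₀ hb τ hτ₀ hτ₁ w hw
  have hpotential := ae_restrict_of_forall_mem (μ := volume) measurableSet_Krect fun p hp =>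
    exp_two_mul_Atil_sub_Azero_sq_le (a := a) hC₀ hB hgrad ha₀ ha hε₀.le hε₁ hb (p := p) hp
  have hA := integrableOn_Krect_of_continuous (x₀ := x₀) (t₀ := t₀) (a := a) (ε := ε)
    (continuous_magneticDensity (exp (2 * t₀)) (continuous_Atil hB.continuousOn t₀) hw)
  have hA₀ := integrableOn_Krect_of_continuous (x₀ := x₀) (t₀ := t₀) (a := a) (ε := ε)
    (continuous_magneticDensity (exp (2 * t₀))
      (continuous_Azero t₀ (fieldB A₁ A₂ (x₀, exp t₀))) hw)
  have hw_sq := integrableOn_Krect_of_continuous (x₀ := x₀) (t₀ := t₀) (a := a) (ε := ε)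
    (hw.continuous.norm.pow 2)
  have hlower := le_integral_magneticDensity (exp_pos _).le (pow_pos hτ₀ 2)
    (pow_lt_one₀ hτ₀.le hτ₁ two_ne_zero) hA₀ hA hw_sq hpotential
  have hupper := integral_magneticDensity_le (exp_pos _).le (pow_pos hτ₀ 2) hA₀ hA hw_sq hpotential
  simp only [← mul_assoc] at hlower hupper
  exact ⟨hlower, hupper⟩

/-- comparison of `q̂^{Ã,0}_K` with the constant-field form `q^{A⁰,0}_K`. -/
theorem form_comparison_constant_field
    (C₀ : ℝ) (hC₀ : 0 < C₀) (a₀ : ℝ) (ha₀ : 1 < a₀) :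
    ∃ C > 0, ∀ A₁ A₂ : ℝ × ℝ → ℝ, ContDiffOn ℝ 2 A₁ UHP → ContDiffOn ℝ 2 A₂ UHP →
      H2 C₀ A₁ A₂ →
      ∀ a : ℝ, 1 / a₀ < a → a ≤ a₀ → ∀ ε₀ : ℝ, 0 < ε₀ → ε₀ < 1 →
      ∀ x₀ t₀ : ℝ, 1 < intenB A₁ A₂ (x₀, Real.exp t₀) →
      ∀ τ : ℝ, 0 < τ → τ < 1 →
      ∀ w : ℝ × ℝ → ℂ, IsTestOn (Krect x₀ t₀ a ε₀) w →
        (1 - τ ^ 2) * qK0 x₀ t₀ a ε₀ (fieldB A₁ A₂ (x₀, Real.exp t₀)) w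
            + (1 - (τ ^ 2)⁻¹) * C * ε₀ ^ 4 * intenB A₁ A₂ (x₀, Real.exp t₀) ^ 2 *
              (∫ p in Krect x₀ t₀ a ε₀, ‖w p‖ ^ 2)
          ≤ qhatK0 A₁ A₂ x₀ t₀ a ε₀ w ∧
        qhatK0 A₁ A₂ x₀ t₀ a ε₀ w ≤
          (1 + τ ^ 2) * qK0 x₀ t₀ a ε₀ (fieldB A₁ A₂ (x₀, Real.exp t₀)) w
            + (1 + (τ ^ 2)⁻¹) * C * ε₀ ^ 4 * intenB A₁ A₂ (x₀, Real.exp t₀) ^ 2 *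
              (∫ p in Krect x₀ t₀ a ε₀, ‖w p‖ ^ 2) := by
  obtain ⟨C, hC, h⟩ := form_comparison_constant_field_general C₀ hC₀.le a₀ (by linarith)
  exact ⟨C, hC, fun A₁ A₂ hA₁ hA₂ hH2 a _ ha ε₀ hε₀ hε₁ x₀ t₀ hb τ hτ₀ hτ₁ w hw =>
    h A₁ A₂ (differentiableOn_fieldB hA₁ hA₂) hH2 a ha ε₀ hε₀ hε₁.le x₀ t₀ hb.le τ hτ₀ hτ₁ w
      (hw.1.of_le (by simp))⟩
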